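/- For the multi-task structure with q ≥ 2: the number of policies is N = q^M, S(Θ) = S*(Θ) = q, D*(Θ) = log q (attained at the uniform distribution on [K]), and consequently S*(Θ)·log N = K·D*(Θ). -/

import Mathlib

open Finset

noncomputable section

/-- `p` is a probability vector on the finite arm set `α`. -/
def IsProbVec {α : Type*} [Fintype α] (p : α → ℝ) : Prop :=
  (∀ a, 0 ≤ p a) ∧ ∑ a, p a = 1

/-- KL-divergence `D(p‖q) = ∑_{a : p(a)>0} p(a) log (p(a)/q(a))`, equal to `+∞` if
`p(a) > 0` for some `a` with `q(a) = 0`. -/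
def KL {α : Type*} [Fintype α] (p q : α → ℝ) : ENNReal :=
  if ∀ a, q a = 0 → p a = 0 then
    ENNReal.ofReal (∑ a ∈ Finset.univ.filter (fun a : α => 0 < p a),
      p a * Real.log (p a / q a))
  else ⊤

/-- `D*(Θ) = inf_τ max_θ D(θ‖τ)` for a family of policies indexed by `ι`. -/
def DstarF {α : Type*} [Fintype α] {ι : Type*} (θ : ι → α → ℝ) : ENNReal :=
  ⨅ τ : {τ : α → ℝ // IsProbVec τ}, ⨆ c : ι, KL (θ c) τ.1

/-!
For any mixture `m = ∑ c, w c • θ c` of policies and any `τ`, the compensation identity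
`∑ c, w c * D(θ c ‖ τ) = ∑ c, w c * D(θ c ‖ m) + D(m ‖ τ)` and Gibbs' inequality show that some
`c` satisfies `D(θ c ‖ m) ≤ D(θ c ‖ τ)`. So if every policy of a subfamily is at divergence at
least `d` from a mixture of that subfamily, then `d ≤ D*(Θ)`. In the multi-task structure the
`q` policies that choose the same arm `j` in every section already have the uniform distribution
as their average, and every policy is at divergence exactly `log q` from it.
-/

section RelEntropy

variable {α : Type*} [Fintype α] {p q : α → ℝ}

/-- The real-valued sum in the KL-divergence, taken over all arms: arms with `p a = 0` contribute
`0`. It is meaningful only when `p` vanishes wherever `q` does, since `x / 0 = 0` and `log 0 = 0`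
turn the remaining infinite terms into `0`. -/
def relEntropy (p q : α → ℝ) : ℝ :=
  ∑ a, p a * Real.log (p a / q a)

theorem KL_eq_ofReal_relEntropy (hp : ∀ a, 0 ≤ p a) (hpq : ∀ a, q a = 0 → p a = 0) :
    KL p q = ENNReal.ofReal (relEntropy p q) := by
  rw [KL, if_pos hpq, relEntropy]
  congr 1
  refine sum_filter_of_ne fun a _ hne => (hp a).lt_of_ne' ?_
  exact left_ne_zero_of_mul hne

theorem KL_eq_top {a : α} (hq : q a = 0) (hp : p a ≠ 0) : KL p q = ⊤ :=
  if_neg fun h => hp (h a hq)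

theorem sub_le_mul_log_div {x y : ℝ} (hx : 0 ≤ x) (hy : 0 ≤ y) (hxy : y = 0 → x = 0) :
    x - y ≤ x * Real.log (x / y) := by
  rcases hx.eq_or_lt with rfl | hx
  · simpa using hy
  · have hy : 0 < y := hy.lt_of_ne' fun h => hx.ne' (hxy h)
    calc x - y = x * (1 - (x / y)⁻¹) := by field_simp
      _ ≤ x * Real.log (x / y) := by
        gcongr
        exact Real.one_sub_inv_le_log_of_pos (div_pos hx hy)

theorem relEntropy_nonneg (hp : ∀ a, 0 ≤ p a) (hq : ∀ a, 0 ≤ q a)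
    (hpq : ∀ a, q a = 0 → p a = 0) (hsum : ∑ a, q a ≤ ∑ a, p a) : 0 ≤ relEntropy p q :=
  calc 0 ≤ ∑ a, (p a - q a) := by rw [sum_sub_distrib]; exact sub_nonneg.2 hsum
    _ ≤ relEntropy p q := sum_le_sum fun a _ => sub_le_mul_log_div (hp a) (hq a) (hpq a)

theorem isProbVec_uniform [Nonempty α] : IsProbVec fun _ : α => 1 / (Fintype.card α : ℝ) :=
  ⟨fun _ => by positivity, by simp⟩

end RelEntropy

theorem sum_comp_fst {ι κ : Type*} [Fintype ι] [Fintype κ] (μ : ι → ℝ) :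
    ∑ a : ι × κ, μ a.1 = Fintype.card κ * ∑ i, μ i := by
  simp only [Fintype.sum_prod_type_right, sum_const, card_univ, nsmul_eq_mul]

section Mixture

variable {α ι : Type*} [Fintype ι] {w : ι → ℝ} {θ : ι → α → ℝ}

/-- The mixture of the family `θ` of policies with weights `w`. -/
def mixture (w : ι → ℝ) (θ : ι → α → ℝ) (a : α) : ℝ :=
  ∑ c, w c * θ c a

theorem weight_mul_eq_zero_of_mixture_eq_zero (hw : ∀ c, 0 ≤ w c) (hθ : ∀ c a, 0 ≤ θ c a)
    {a : α} (ha : mixture w θ a = 0) (c : ι) : w c * θ c a = 0 :=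
  (sum_eq_zero_iff_of_nonneg fun c _ => mul_nonneg (hw c) (hθ c a)).1 ha c (mem_univ c)

variable [Fintype α]

theorem IsProbVec.mixture (hw : IsProbVec w) (hθ : ∀ c, IsProbVec (θ c)) :
    IsProbVec (mixture w θ) := by
  refine ⟨fun a => sum_nonneg fun c _ => mul_nonneg (hw.1 c) ((hθ c).1 a), ?_⟩
  calc ∑ a, ∑ c, w c * θ c a = ∑ c, w c * ∑ a, θ c a := by
        simp only [mul_sum]; exact sum_comm
    _ = 1 := by simp only [(hθ _).2, mul_one, hw.2]

theorem sum_weight_mul_relEntropy (hw : ∀ c, 0 ≤ w c) (hθ : ∀ c a, 0 ≤ θ c a) {τ : α → ℝ}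
    (hτ : ∀ a, τ a = 0 → mixture w θ a = 0) :
    ∑ c, w c * relEntropy (θ c) τ =
      ∑ c, w c * relEntropy (θ c) (mixture w θ) + relEntropy (mixture w θ) τ := by
  have pointwise (c : ι) (a : α) :
      w c * (θ c a * Real.log (θ c a / τ a)) =
        w c * (θ c a * Real.log (θ c a / mixture w θ a)) +
          w c * θ c a * Real.log (mixture w θ a / τ a) := by
    by_cases hzero : w c * θ c a = 0
    · simp only [← mul_assoc, hzero, zero_mul, add_zero]
    · have hθa : θ c a ≠ 0 := right_ne_zero_of_mul hzero
      have hmix : mixture w θ a ≠ 0 := fun h =>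
        hzero (weight_mul_eq_zero_of_mixture_eq_zero hw hθ h c)
      have hτa : τ a ≠ 0 := fun h => hmix (hτ a h)
      rw [Real.log_div hθa hτa, Real.log_div hθa hmix, Real.log_div hmix hτa]
      ring
  have mixture_term : relEntropy (mixture w θ) τ =
      ∑ c, ∑ a, w c * θ c a * Real.log (mixture w θ a / τ a) := by
    rw [sum_comm]
    exact sum_congr rfl fun a _ => sum_mul ..
  rw [mixture_term, ← sum_add_distrib]
  refine sum_congr rfl fun c _ => ?_
  simp only [relEntropy, mul_sum, pointwise, sum_add_distrib]

theorem exists_pos_weight_le_of_sum_weight_mul_le (hw : IsProbVec w) {x y : ι → ℝ}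
    (hxy : ∑ c, w c * x c ≤ ∑ c, w c * y c) : ∃ c, 0 < w c ∧ x c ≤ y c := by
  by_contra! hlt
  obtain ⟨c, -, hc⟩ : ∃ c ∈ univ, 0 < w c :=
    exists_lt_of_sum_lt (by simp [hw.2])
  refine hxy.not_gt (sum_lt_sum (fun c _ => ?_)
    ⟨c, mem_univ c, mul_lt_mul_of_pos_left (hlt c hc) hc⟩)
  rcases (hw.1 c).eq_or_lt with hzero | hpos
  · simp [← hzero]
  · exact mul_le_mul_of_nonneg_left (hlt c hpos).le hpos.le

theorem exists_KL_mixture_le (hw : IsProbVec w) (hθ : ∀ c, IsProbVec (θ c)) {τ : α → ℝ}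
    (hτ : IsProbVec τ) : ∃ c, KL (θ c) (mixture w θ) ≤ KL (θ c) τ := by
  have hmix := hw.mixture hθ
  have hθ_nonneg (c : ι) := (hθ c).1
  by_cases hdom : ∀ c a, τ a = 0 → θ c a = 0
  · have hmix_dom (a : α) (ha : τ a = 0) : mixture w θ a = 0 :=
      sum_eq_zero fun c _ => by rw [hdom c a ha, mul_zero]
    have gibbs : 0 ≤ relEntropy (mixture w θ) τ :=
      relEntropy_nonneg hmix.1 hτ.1 hmix_dom (hτ.2.trans hmix.2.symm).le
    obtain ⟨c, hc, hle⟩ := exists_pos_weight_le_of_sum_weight_mul_le hw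
      ((le_add_of_nonneg_right gibbs).trans_eq
        (sum_weight_mul_relEntropy hw.1 hθ_nonneg hmix_dom).symm)
    have hdom_mix (a : α) (ha : mixture w θ a = 0) : θ c a = 0 :=
      (mul_eq_zero_iff_left hc.ne').1
        (weight_mul_eq_zero_of_mixture_eq_zero hw.1 hθ_nonneg ha c)
    refine ⟨c, ?_⟩
    rw [KL_eq_ofReal_relEntropy (hθ_nonneg c) hdom_mix,
      KL_eq_ofReal_relEntropy (hθ_nonneg c) (hdom c)]
    exact ENNReal.ofReal_le_ofReal hle
  · push Not at hdom
    obtain ⟨c, a, hτa, hθa⟩ := hdom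
    exact ⟨c, le_top.trans_eq (KL_eq_top hτa hθa).symm⟩

theorem le_DstarF_of_le_KL_mixture (hw : IsProbVec w) (hθ : ∀ c, IsProbVec (θ c)) {d : ENNReal}
    (hd : ∀ c, d ≤ KL (θ c) (mixture w θ)) : d ≤ DstarF θ :=
  le_iInf fun τ =>
    let ⟨c, hc⟩ := exists_KL_mixture_le hw hθ τ.2
    (hd c).trans (hc.trans (le_iSup (fun c => KL (θ c) τ.1) c))

end Mixture

section DstarF

variable {α ι κ : Type*} [Fintype α]

theorem DstarF_le_iSup_KL (θ : ι → α → ℝ) {τ : α → ℝ} (hτ : IsProbVec τ) :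
    DstarF θ ≤ ⨆ c, KL (θ c) τ :=
  iInf_le (fun τ : {τ : α → ℝ // IsProbVec τ} => ⨆ c, KL (θ c) τ.1) ⟨τ, hτ⟩

theorem DstarF_comp_le (θ : ι → α → ℝ) (e : κ → ι) : DstarF (θ ∘ e) ≤ DstarF θ :=
  iInf_mono fun τ => iSup_comp_le (fun c => KL (θ c) τ.1) e

end DstarF

section SectionPolicy

variable {ι κ : Type*} [DecidableEq κ] {μ : ι → ℝ}

/-- The policy on arms `(i, j)` that puts the whole mass `μ i` of section `i` on the arm
`(i, c i)`. The multi-task structure is the case of equal masses `μ i = 1 / M`. -/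
def sectionPolicy (μ : ι → ℝ) (c : ι → κ) (a : ι × κ) : ℝ :=
  if a.2 = c a.1 then μ a.1 else 0

theorem sectionPolicy_nonneg (hμ : ∀ i, 0 ≤ μ i) (c : ι → κ) (a : ι × κ) :
    0 ≤ sectionPolicy μ c a :=
  ite_nonneg (hμ a.1) le_rfl

theorem sectionPolicy_le (hμ : ∀ i, 0 ≤ μ i) (c : ι → κ) (a : ι × κ) :
    sectionPolicy μ c a ≤ μ a.1 :=
  (ite_le_sup ..).trans (sup_le le_rfl (hμ a.1))

theorem iSup_sectionPolicy (hμ : ∀ i, 0 ≤ μ i) (a : ι × κ) :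
    ⨆ c : ι → κ, sectionPolicy μ c a = μ a.1 :=
  IsGreatest.csSup_eq ⟨⟨fun _ => a.2, if_pos rfl⟩,
    Set.forall_mem_range.2 fun c => sectionPolicy_le hμ c a⟩

theorem iInf_sectionPolicy [Nontrivial κ] (hμ : ∀ i, 0 ≤ μ i) (a : ι × κ) :
    ⨅ c : ι → κ, sectionPolicy μ c a = 0 :=
  let ⟨j, hj⟩ := exists_ne a.2
  IsLeast.csInf_eq ⟨⟨fun _ => j, if_neg hj.symm⟩,
    Set.forall_mem_range.2 fun c => sectionPolicy_nonneg hμ c a⟩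

variable [Fintype κ]

theorem mixture_const_sectionPolicy (μ : ι → ℝ) :
    mixture (fun _ : κ => 1 / (Fintype.card κ : ℝ)) (sectionPolicy μ ∘ Function.const ι) =
      fun a => μ a.1 / Fintype.card κ := by
  ext a
  change ∑ j, 1 / (Fintype.card κ : ℝ) * (if a.2 = j then μ a.1 else 0) = _
  simp [div_eq_inv_mul]

variable [Fintype ι]

theorem isProbVec_sectionPolicy (hμ : IsProbVec μ) (c : ι → κ) :
    IsProbVec (sectionPolicy μ c) :=
  ⟨sectionPolicy_nonneg hμ.1 c, by simp [sectionPolicy, Fintype.sum_prod_type, hμ.2]⟩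

theorem relEntropy_sectionPolicy (μ : ι → ℝ) (c : ι → κ) (τ : ι × κ → ℝ) :
    relEntropy (sectionPolicy μ c) τ = ∑ i, μ i * Real.log (μ i / τ (i, c i)) := by
  rw [relEntropy, Fintype.sum_prod_type]
  refine sum_congr rfl fun i _ => ?_
  rw [Fintype.sum_eq_single (c i) fun j hj => by simp [sectionPolicy, hj]]
  simp [sectionPolicy]

variable [Nonempty κ]

theorem KL_sectionPolicy_fst_div_card (hμ : IsProbVec μ) (c : ι → κ) :
    KL (sectionPolicy μ c) (fun a => μ a.1 / Fintype.card κ) =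
      ENNReal.ofReal (Real.log (Fintype.card κ)) := by
  have hcard : (Fintype.card κ : ℝ) ≠ 0 := Nat.cast_ne_zero.2 Fintype.card_ne_zero
  have hdom (a : ι × κ) (ha : μ a.1 / Fintype.card κ = 0) : sectionPolicy μ c a = 0 := by
    have hμa : μ a.1 = 0 := (div_eq_zero_iff.1 ha).resolve_right hcard
    simp [sectionPolicy, hμa]
  have log_ratio (i : ι) : μ i * Real.log (μ i / (μ i / Fintype.card κ)) =
      μ i * Real.log (Fintype.card κ) := by
    rcases eq_or_ne (μ i) 0 with hi | hi
    · simp [hi]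
    · rw [div_div_cancel₀ hi]
  rw [KL_eq_ofReal_relEntropy (sectionPolicy_nonneg hμ.1 c) hdom, relEntropy_sectionPolicy]
  simp only [log_ratio, ← sum_mul, hμ.2, one_mul]

theorem iSup_KL_sectionPolicy_fst_div_card (hμ : IsProbVec μ) :
    ⨆ c : ι → κ, KL (sectionPolicy μ c) (fun a => μ a.1 / Fintype.card κ) =
      ENNReal.ofReal (Real.log (Fintype.card κ)) := by
  simp only [KL_sectionPolicy_fst_div_card hμ, ciSup_const]

theorem DstarF_sectionPolicy (hμ : IsProbVec μ) :
    DstarF (sectionPolicy (κ := κ) μ) = ENNReal.ofReal (Real.log (Fintype.card κ)) := by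
  have hpolicy (j : κ) : IsProbVec ((sectionPolicy μ ∘ Function.const ι) j) :=
    isProbVec_sectionPolicy hμ _
  apply le_antisymm
  · rw [← iSup_KL_sectionPolicy_fst_div_card hμ, ← mixture_const_sectionPolicy]
    exact DstarF_le_iSup_KL _ (isProbVec_uniform.mixture hpolicy)
  · refine le_trans ?_ (DstarF_comp_le (sectionPolicy μ) (Function.const ι))
    refine le_DstarF_of_le_KL_mixture isProbVec_uniform hpolicy fun j => ?_
    rw [mixture_const_sectionPolicy]
    exact (KL_sectionPolicy_fst_div_card hμ _).ge

end SectionPolicy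

theorem multi_task_structure_general {ι κ : Type*} [Fintype ι] [DecidableEq ι] [Fintype κ]
    [DecidableEq κ] [Nontrivial κ] {μ : ι → ℝ} (hμ : IsProbVec μ) :
    Fintype.card (ι → κ) = Fintype.card κ ^ Fintype.card ι ∧
    ∑ a : ι × κ, ⨆ c : ι → κ, sectionPolicy μ c a = Fintype.card κ ∧
    ∑ a : ι × κ, ((⨆ c : ι → κ, sectionPolicy μ c a) - ⨅ c : ι → κ, sectionPolicy μ c a) =
      Fintype.card κ ∧
    ⨆ c : ι → κ, KL (sectionPolicy μ c) (fun a => μ a.1 / Fintype.card κ) =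
      ENNReal.ofReal (Real.log (Fintype.card κ)) ∧
    DstarF (sectionPolicy (κ := κ) μ) = ENNReal.ofReal (Real.log (Fintype.card κ)) ∧
    Fintype.card κ * Real.log ((Fintype.card κ : ℝ) ^ Fintype.card ι) =
      Fintype.card κ * Fintype.card ι * Real.log (Fintype.card κ) := by
  refine ⟨Fintype.card_fun, ?_, ?_, iSup_KL_sectionPolicy_fst_div_card hμ,
    DstarF_sectionPolicy hμ, ?_⟩
  · simp only [iSup_sectionPolicy hμ.1, sum_comp_fst, hμ.2, mul_one]
  · simp only [iSup_sectionPolicy hμ.1, iInf_sectionPolicy hμ.1, sub_zero, sum_comp_fst, hμ.2,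
      mul_one]
  · rw [Real.log_pow, mul_assoc]

/-- Multi-task structure: the arms are pairs `(i,j) ∈ [M] × [q]` and each policy puts
mass `1/M` on exactly one arm of each section `i`, i.e. is determined by a choice
function `c : [M] → [q]`.  For `q ≥ 2`: `N = q^M`, `S(Θ) = S*(Θ) = q`,
`D*(Θ) = log q` (attained at the uniform distribution on the `K = qM` arms), and
consequently `S*(Θ)·log N = K·D*(Θ)`. -/
theorem multi_task_structure {M q : ℕ} (hq : 2 ≤ q) (hM : 1 ≤ M) :
    Fintype.card (Fin M → Fin q) = q ^ M ∧
    (∑ a : Fin M × Fin q,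
        ⨆ c : Fin M → Fin q, (if a.2 = c a.1 then (1 : ℝ) / M else 0)) = (q : ℝ) ∧
    (∑ a : Fin M × Fin q,
        ((⨆ c : Fin M → Fin q, (if a.2 = c a.1 then (1 : ℝ) / M else 0)) -
          ⨅ c : Fin M → Fin q, (if a.2 = c a.1 then (1 : ℝ) / M else 0))) = (q : ℝ) ∧
    (⨆ c : Fin M → Fin q,
        KL (fun a : Fin M × Fin q => if a.2 = c a.1 then (1 : ℝ) / M else 0)
          (fun _ : Fin M × Fin q => (1 : ℝ) / (q * M))) =
      ENNReal.ofReal (Real.log q) ∧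
    DstarF (fun (c : Fin M → Fin q) (a : Fin M × Fin q) =>
        if a.2 = c a.1 then (1 : ℝ) / M else 0) = ENNReal.ofReal (Real.log q) ∧
    (q : ℝ) * Real.log ((q : ℝ) ^ M) = ((q : ℝ) * M) * Real.log q := by
  have : NeZero M := ⟨by omega⟩
  have : Nontrivial (Fin q) := Fin.nontrivial_iff_two_le.2 hq
  have uniform : IsProbVec fun _ : Fin M => (1 : ℝ) / M := by
    simpa only [Fintype.card_fin] using isProbVec_uniform (α := Fin M)
  have general := multi_task_structure_general (κ := Fin q) uniform
  simp only [Fintype.card_fin, div_div, mul_comm (M : ℝ) (q : ℝ)] at general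
  exact general
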